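/- arXiv:math/9201203 — 2 statements merged into one kernel-verified Lean document; each statement's English description precedes it below -/
import Mathlib

section
/- Let 1 ≤ k ≤ n and let U be a k-dimensional linear subspace of ℝ^n. If 1 ≤ p ≤ q ≤ ∞, then |B_p^n ∩ U| / |B_p^k| ≤ |B_q^n ∩ U| / |B_q^k|, where |B_p^n ∩ U| denotes the k-dimensional (Lebesgue) volume of the section B_p^n ∩ U measured inside U, and |B_p^k| denotes the k-dimensional volume of B_p^k. -/
open MeasureTheory
open scoped Classical ENNReal

/-- The unit ball of `ℓ_p^m` in `ℝ^m`, for `p ∈ [1, ∞]` (an extended real). -/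
noncomputable def lpBall (m : ℕ) (p : ℝ≥0∞) : Set (EuclideanSpace ℝ (Fin m)) :=
  if p = ∞ then {x | ∀ i, |x i| ≤ 1} else {x | ∑ i, |x i| ^ p.toReal ≤ 1}

theorem bm_compact {K L : Set ℝ} {C : Set ℝ} (hK : IsCompact K) (hL : IsCompact L)
    (hK0 : K.Nonempty) (hL0 : L.Nonempty) (h : ∀ x ∈ K, ∀ y ∈ L, x + y ∈ C) :
    volume K + volume L ≤ volume C := by
  have hM := hK.sSup_mem hK0
  have hm := hL.sInf_mem hL0
  set M := sSup K
  set m := sInf L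
  have h1 : volume ((fun x => x + m) '' K) = volume K := by
    rw [Set.image_add_right, measure_preimage_add_right]
  have h2 : volume ((fun x => M + x) '' L) = volume L := by
    rw [Set.image_add_left, measure_preimage_add]
  have hd : AEDisjoint volume ((fun x => x + m) '' K) ((fun x => M + x) '' L) := by
    refine measure_mono_null (t := {M + m}) ?_ (by simp)
    rintro _ ⟨⟨x, hx, rfl⟩, ⟨y, hy, hxy⟩⟩
    have := le_csSup hK.bddAbove hx
    have := csInf_le hL.bddBelow hy
    simp only [Set.mem_singleton_iff]
    simp only at hxy
    linarith
  have hmeas : MeasurableSet ((fun x => M + x) '' L) :=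
    (hL.image (by fun_prop)).measurableSet
  rw [← h1, ← h2, ← measure_union₀ hmeas.nullMeasurableSet hd]
  apply measure_mono
  rintro _ (⟨x, hx, rfl⟩ | ⟨x, hx, rfl⟩)
  · exact h _ hx _ hm
  · exact h _ hM _ hx

theorem bm_one {A B C : Set ℝ} (hA : MeasurableSet A) (hB : MeasurableSet B)
    (hA0 : A.Nonempty) (hB0 : B.Nonempty) (h : ∀ x ∈ A, ∀ y ∈ B, x + y ∈ C) :
    volume A + volume B ≤ volume C := by
  obtain ⟨a, ha⟩ := hA0
  obtain ⟨b, hb⟩ := hB0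
  have key : ∀ K ⊆ A, IsCompact K → ∀ L ⊆ B, IsCompact L → volume K + volume L ≤ volume C := by
    intro K hKA hK L hLB hL
    refine le_trans (add_le_add (measure_mono (Set.subset_insert a K))
      (measure_mono (Set.subset_insert b L))) ?_
    apply bm_compact (hK.insert a) (hL.insert b) (Set.insert_nonempty _ _) (Set.insert_nonempty _ _)
    intro x hx y hy
    exact h x (Set.insert_subset ha hKA hx) y (Set.insert_subset hb hLB hy)
  refine ENNReal.le_of_forall_pos_le_add ?_ |> fun (f : volume A + volume B ≤ volume C) => f
  intro ε hε hC
  by_contra hcon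
  push Not at hcon
  rw [hA.measure_eq_iSup_isCompact, hB.measure_eq_iSup_isCompact] at hcon
  have : (⨆ K, ⨆ (_ : K ⊆ A), ⨆ (_ : IsCompact K), volume K) +
     (⨆ K, ⨆ (_ : K ⊆ B), ⨆ (_ : IsCompact K), volume K) ≤ volume C := by
    have e1 : ∀ L ⊆ B, IsCompact L →
       (⨆ K, ⨆ (_ : K ⊆ A), ⨆ (_ : IsCompact K), volume K) ≤ volume C - volume L := by
      intro L hL hL'
      refine iSup_le fun K => iSup_le fun hK => iSup_le fun hK' => ?_
      exact ENNReal.le_sub_of_add_le_right hL'.measure_lt_top.ne (key K hK hK' L hL hL')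
    have e2 : (⨆ K, ⨆ (_ : K ⊆ B), ⨆ (_ : IsCompact K), volume K) ≤ volume C -
        (⨆ K, ⨆ (_ : K ⊆ A), ⨆ (_ : IsCompact K), volume K) := by
      refine iSup_le fun L => iSup_le fun hL => iSup_le fun hL' => ?_
      have := e1 L hL hL'
      have h3 : (⨆ K, ⨆ (_ : K ⊆ A), ⨆ (_ : IsCompact K), volume K) ≤ volume C :=
        this.trans tsub_le_self
      refine ENNReal.le_sub_of_add_le_left (h3.trans_lt hC).ne ?_
      have h4 : volume L ≤ volume C := by
        have := key ∅ (by simp) isCompact_empty L hL hL'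
        simpa using this
      calc _ ≤ (volume C - volume L) + volume L := by gcongr
        _ = volume C := tsub_add_cancel_of_le h4
    have h3 : (⨆ K, ⨆ (_ : K ⊆ A), ⨆ (_ : IsCompact K), volume K) ≤ volume C := by
      simpa using e1 ∅ (by simp) isCompact_empty
    calc _ ≤ _ + (volume C -
        (⨆ K, ⨆ (_ : K ⊆ A), ⨆ (_ : IsCompact K), volume K)) := by gcongr
      _ = volume C := add_tsub_cancel_of_le h3
  exact absurd (hcon.trans_le this) (not_lt.mpr le_self_add)

theorem pl_one_real {a : ℝ} (ha : 0 < a) (ha1 : a < 1) {u v h : ℝ → ℝ}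
    (hu : Measurable u) (hv : Measurable v) (hh : Measurable h)
    (hu0 : ∀ x, 0 ≤ u x) (hv0 : ∀ x, 0 ≤ v x) (hh0 : ∀ x, 0 ≤ h x)
    (hu1 : ∀ x, u x ≤ 1) (hv1 : ∀ x, v x ≤ 1)
    (hus : ∀ s < 1, ∃ x, s < u x) (hvs : ∀ s < 1, ∃ x, s < v x)
    (H : ∀ x y, u x ^ a * v y ^ (1 - a) ≤ h (a * x + (1 - a) * y)) :
    ENNReal.ofReal a * (∫⁻ x, ENNReal.ofReal (u x)) +
      ENNReal.ofReal (1 - a) * (∫⁻ x, ENNReal.ofReal (v x)) ≤ ∫⁻ x, ENNReal.ofReal (h x) := by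
  have hb : 0 < 1 - a := by linarith
  rw [lintegral_eq_lintegral_meas_lt _ (Filter.Eventually.of_forall hu0) hu.aemeasurable,
    lintegral_eq_lintegral_meas_lt _ (Filter.Eventually.of_forall hv0) hv.aemeasurable,
    lintegral_eq_lintegral_meas_lt _ (Filter.Eventually.of_forall hh0) hh.aemeasurable]
  rw [← lintegral_const_mul' _ _ ENNReal.ofReal_ne_top, ← lintegral_const_mul' _ _ ENNReal.ofReal_ne_top]
  have hmeas : Measurable fun t : ℝ => ENNReal.ofReal a * volume {x | t < u x} := by
    refine Measurable.const_mul (Antitone.measurable ?_) _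
    intro s t hst
    exact measure_mono fun x hx => lt_of_le_of_lt hst hx
  rw [← lintegral_add_left hmeas]
  refine setLIntegral_mono' measurableSet_Ioi ?_
  intro t ht
  have ht : 0 < t := ht
  by_cases ht1 : t < 1
  · obtain ⟨x0, hx0⟩ := hus t ht1
    obtain ⟨y0, hy0⟩ := hvs t ht1
    have e : ∀ (c : ℝ), 0 < c → ∀ S : Set ℝ, ENNReal.ofReal c * volume S = volume ((fun x => c * x) '' S) := by
      intro c hc S
      have := Measure.addHaar_smul (volume : Measure ℝ) c S
      simp only [Module.finrank_self, pow_one, abs_of_pos hc] at this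
      exact this.symm
    rw [e a ha, e _ hb]
    have mi : ∀ c : ℝ, 0 < c → ∀ S : Set ℝ, MeasurableSet S → MeasurableSet ((fun x => c * x) '' S) := by
      intro c hc S hS
      exact (MeasurableEquiv.mulLeft₀ c hc.ne').measurableSet_image.mpr hS
    apply bm_one (mi _ ha _ (measurableSet_lt measurable_const hu))
      (mi _ hb _ (measurableSet_lt measurable_const hv)) ⟨_, x0, hx0, rfl⟩ ⟨_, y0, hy0, rfl⟩
    rintro _ ⟨x, hx, rfl⟩ _ ⟨y, hy, rfl⟩
    refine lt_of_lt_of_le ?_ (H x y)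
    have hx : t < u x := hx
    have hy : t < v y := hy
    calc t = t ^ a * t ^ (1 - a) := by rw [← Real.rpow_add ht]; simp
      _ < u x ^ a * v y ^ (1 - a) := by
        apply mul_lt_mul'' (Real.rpow_lt_rpow ht.le hx ha) (Real.rpow_lt_rpow ht.le hy hb) <;> positivity
  · have h1 : {x | t < u x} = ∅ := by
      ext x; simp; linarith [hu1 x]
    have h2 : {x | t < v x} = ∅ := by
      ext x; simp; linarith [hv1 x]
    simp [h1, h2]

theorem ennreal_amgm {a : ℝ} (ha : 0 < a) (ha1 : a < 1) (x y : ℝ≥0∞) :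
    x ^ a * y ^ (1 - a) ≤ ENNReal.ofReal a * x + ENNReal.ofReal (1 - a) * y := by
  have hb : 0 < 1 - a := by linarith
  by_cases hx : x = ∞
  · subst hx
    rw [ENNReal.mul_top (by simpa using ha)]; simp
  by_cases hy : y = ∞
  · subst hy
    rw [ENNReal.mul_top (by simpa using ha1)]; simp
  lift x to NNReal using hx
  lift y to NNReal using hy
  have := NNReal.geom_mean_le_arith_mean2_weighted a.toNNReal (1 - a).toNNReal x y (by
    rw [← Real.toNNReal_add ha.le hb.le]; simp)
  rw [Real.coe_toNNReal _ ha.le, Real.coe_toNNReal _ hb.le] at this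
  rw [ENNReal.ofReal, ENNReal.ofReal, ← ENNReal.coe_rpow_of_nonneg _ ha.le,
    ← ENNReal.coe_rpow_of_nonneg _ hb.le]
  exact_mod_cast this

theorem pl_one_bdd {a : ℝ} (ha : 0 < a) (ha1 : a < 1) {u v h : ℝ → ℝ≥0∞}
    (hu : Measurable u) (hv : Measurable v) (hh : Measurable h) (N : ℕ)
    (huN : ∀ x, u x ≤ N) (hvN : ∀ x, v x ≤ N)
    (H : ∀ x y, u x ^ a * v y ^ (1 - a) ≤ h (a * x + (1 - a) * y)) :
    (∫⁻ x, u x) ^ a * (∫⁻ x, v x) ^ (1 - a) ≤ ∫⁻ x, h x := by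
  have hb : 0 < 1 - a := by linarith
  obtain ⟨M, hMdef⟩ : ∃ M, M = ⨆ x, u x := ⟨_, rfl⟩
  obtain ⟨M', hMdef'⟩ : ∃ M, M = ⨆ x, v x := ⟨_, rfl⟩
  have hM : M ≠ ∞ := by
    rw [hMdef]; exact ((iSup_le huN).trans_lt (ENNReal.natCast_lt_top N)).ne
  have hM' : M' ≠ ∞ := by
    rw [hMdef']; exact ((iSup_le hvN).trans_lt (ENNReal.natCast_lt_top N)).ne
  have huM : ∀ x, u x ≤ M := fun x => hMdef ▸ le_iSup u x
  have hvM : ∀ x, v x ≤ M' := fun x => hMdef' ▸ le_iSup v x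
  by_cases hM0 : M = 0
  · have : ∀ x, u x = 0 := fun x => by simpa [hM0] using huM x
    simp [this, ha]
  by_cases hM0' : M' = 0
  · have : ∀ x, v x = 0 := fun x => by simpa [hM0'] using hvM x
    simp [this, ha1]
  have key : ∀ (w : ℝ → ℝ≥0∞) (m : ℝ≥0∞), m ≠ ∞ → m ≠ 0 → (∀ x, w x ≤ m) → ∀ x, w x / m ≤ 1 := by
    intro w m h1 h2 h3 x
    rw [ENNReal.div_le_iff h2 h1, one_mul]; exact h3 x
  have hu1 := key u M hM hM0 huM
  have hv1 := key v M' hM' hM0' hvM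
  have hsup : ∀ (w : ℝ → ℝ≥0∞) (m : ℝ≥0∞), m ≠ ∞ → m ≠ 0 → (m = ⨆ x, w x) → (∀ x, w x / m ≤ 1) →
      ∀ s : ℝ, s < 1 → ∃ x, s < (w x / m).toReal := by
    intro w m h1 h2 h3 h5 s hs
    have h4 : ENNReal.ofReal s * m < m := by
      calc ENNReal.ofReal s * m < 1 * m := by
            apply ENNReal.mul_lt_mul_left h2 h1
            simpa using hs
        _ = m := one_mul _
    rw [h3] at h4
    obtain ⟨x, hx⟩ := lt_iSup_iff.mp h4
    refine ⟨x, ?_⟩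
    rw [← h3, ← ENNReal.lt_div_iff_mul_lt (Or.inl h2) (Or.inl h1)] at hx
    by_contra hcon
    push Not at hcon
    refine absurd hx (not_lt.mpr ?_)
    rw [← ENNReal.ofReal_toReal ((h5 x).trans_lt ENNReal.one_lt_top).ne]
    exact ENNReal.ofReal_le_ofReal hcon
  set D := M ^ a * M' ^ (1 - a) with hD
  have hDt : D ≠ ∞ := ENNReal.mul_ne_top (ENNReal.rpow_ne_top_of_nonneg ha.le hM)
    (ENNReal.rpow_ne_top_of_nonneg hb.le hM')
  have hD0 : D ≠ 0 := mul_ne_zero (by simp [hM0, hM, ha.le]) (by simp [hM0', hM', hb.le])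
  have R := pl_one_real ha ha1 (u := fun x => (u x / M).toReal) (v := fun x => (v x / M').toReal)
    (h := fun x => (min (h x / D) 1).toReal) (by fun_prop) (by fun_prop) (by fun_prop)
    (fun _ => ENNReal.toReal_nonneg) (fun _ => ENNReal.toReal_nonneg) (fun _ => ENNReal.toReal_nonneg)
    (fun x => ENNReal.toReal_le_of_le_ofReal zero_le_one (by simpa using hu1 x))
    (fun x => ENNReal.toReal_le_of_le_ofReal zero_le_one (by simpa using hv1 x))
    (hsup u M hM hM0 hMdef hu1) (hsup v M' hM' hM0' hMdef' hv1) (by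
      intro x y
      rw [ENNReal.toReal_rpow, ENNReal.toReal_rpow, ← ENNReal.toReal_mul]
      refine ENNReal.toReal_mono (by simp) (le_min ?_ ?_)
      · rw [ENNReal.div_rpow_of_nonneg _ _ ha.le, ENNReal.div_rpow_of_nonneg _ _ hb.le,
          ← ENNReal.mul_div_mul_comm]
        · gcongr
          exact H x y
        · left; simp [hM0, hM, ha.le]
        · left; simp [hM, hM0, ha.le]
      · exact mul_le_one' (ENNReal.rpow_le_one (hu1 x) ha.le) (ENNReal.rpow_le_one (hv1 y) hb.le))
  have fin : ∀ z : ℝ≥0∞, z ≤ 1 → ENNReal.ofReal z.toReal = z := fun z hz =>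
    ENNReal.ofReal_toReal (hz.trans_lt ENNReal.one_lt_top).ne
  simp only [fin _ (hu1 _), fin _ (hv1 _), fin _ (min_le_right _ _)] at R
  have R2 := (ennreal_amgm ha ha1 _ _).trans R
  have R3 : ∫⁻ x, min (h x / D) 1 ≤ ∫⁻ x, h x / D := lintegral_mono fun x => min_le_left _ _
  have R4 := R2.trans R3
  simp only [div_eq_mul_inv] at R4
  rw [lintegral_mul_const _ hu, lintegral_mul_const _ hv, lintegral_mul_const _ hh,
    ENNReal.mul_rpow_of_nonneg _ _ ha.le, ENNReal.mul_rpow_of_nonneg _ _ hb.le] at R4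
  have : (∫⁻ x, u x) ^ a * (∫⁻ x, v x) ^ (1 - a) * D⁻¹ ≤ (∫⁻ x, h x) * D⁻¹ := by
    refine le_trans (le_of_eq ?_) R4
    rw [hD, ENNReal.mul_inv, ENNReal.inv_rpow, ENNReal.inv_rpow]
    · ring
    · left; simp [hM0, hM, ha.le]
    · left; simp [hM, hM0, ha.le]
  rwa [ENNReal.mul_le_mul_iff_left (by simpa using hDt) (by simpa using hD0)] at this

theorem pl_one {a : ℝ} (ha : 0 < a) (ha1 : a < 1) {u v h : ℝ → ℝ≥0∞}
    (hu : Measurable u) (hv : Measurable v) (hh : Measurable h)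
    (H : ∀ x y, u x ^ a * v y ^ (1 - a) ≤ h (a * x + (1 - a) * y)) :
    (∫⁻ x, u x) ^ a * (∫⁻ x, v x) ^ (1 - a) ≤ ∫⁻ x, h x := by
  have hb : 0 < 1 - a := by linarith
  by_cases h1 : ∫⁻ x, u x = 0
  · simp [h1, ha]
  by_cases h2 : ∫⁻ x, v x = 0
  · simp [h2, ha1]
  have T : ∀ w : ℝ → ℝ≥0∞, Measurable w → Filter.Tendsto (fun N : ℕ => ∫⁻ x, min (w x) N) Filter.atTop
      (nhds (∫⁻ x, w x)) := by
    intro w hw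
    refine lintegral_tendsto_of_tendsto_of_monotone (fun n => by fun_prop) ?_ ?_
    · refine Filter.Eventually.of_forall fun x n m hnm => ?_
      simp only
      gcongr
    · refine Filter.Eventually.of_forall fun x => ?_
      have : Filter.Tendsto (fun N : ℕ => min (w x) (N : ℝ≥0∞)) Filter.atTop (nhds (min (w x) ∞)) :=
        tendsto_const_nhds.min ENNReal.tendsto_nat_nhds_top
      simpa using this
  have T2 : Filter.Tendsto (fun N : ℕ => (∫⁻ x, min (u x) N) ^ a * (∫⁻ x, min (v x) N) ^ (1 - a))
      Filter.atTop (nhds ((∫⁻ x, u x) ^ a * (∫⁻ x, v x) ^ (1 - a))) := by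
    refine ENNReal.Tendsto.mul ((ENNReal.continuous_rpow_const.tendsto _).comp (T u hu)) ?_
      ((ENNReal.continuous_rpow_const.tendsto _).comp (T v hv)) ?_
    · left; simp [h1, ha.le, ha.not_gt]
    · left; simp [h2, hb.le, hb.not_gt, ha1.le, ha1.not_gt]
  refine le_of_tendsto' T2 fun N => ?_
  refine pl_one_bdd ha ha1 (by fun_prop) (by fun_prop) hh N (fun x => min_le_right _ _)
    (fun x => min_le_right _ _) fun x y => ?_
  refine le_trans ?_ (H x y)
  gcongr <;> exact min_le_left _ _

theorem pl_pi {a : ℝ} (ha : 0 < a) (ha1 : a < 1) : ∀ (m : ℕ) {u v h : (Fin m → ℝ) → ℝ≥0∞}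
    (_ : Measurable u) (_ : Measurable v) (_ : Measurable h)
    (_ : ∀ x y, u x ^ a * v y ^ (1 - a) ≤ h (a • x + (1 - a) • y)),
    (∫⁻ x, u x) ^ a * (∫⁻ x, v x) ^ (1 - a) ≤ ∫⁻ x, h x
  | 0, u, v, h, hu, hv, hh, H => by
    have e : ∀ w : (Fin 0 → ℝ) → ℝ≥0∞, ∫⁻ x, w x = w 0 := by
      intro w
      rw [lintegral_unique]
      have h1 : volume (Set.univ : Set (Fin 0 → ℝ)) = 1 := by
        rw [volume_pi, Measure.pi_univ]; simp
      rw [h1, mul_one]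
      congr 1
      exact Subsingleton.elim _ _
    rw [e, e, e]
    simpa using H 0 0
  | m + 1, u, v, h, hu, hv, hh, H => by
    let Φ := (MeasurableEquiv.piFinSuccAbove (fun _ : Fin (m + 1) => ℝ) 0).symm
    have hΦ : MeasurePreserving Φ (volume.prod volume) volume :=
      (volume_preserving_piFinSuccAbove (fun _ : Fin (m + 1) => ℝ) 0).symm
    have e : ∀ w : (Fin (m + 1) → ℝ) → ℝ≥0∞, Measurable w →
        ∫⁻ x, w x = ∫⁻ t : ℝ, ∫⁻ y : Fin m → ℝ, w (Φ (t, y)) := by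
      intro w hw
      rw [← hΦ.lintegral_comp hw, lintegral_prod]
      exact (hw.comp Φ.measurable).aemeasurable
    have ms : ∀ w : (Fin (m + 1) → ℝ) → ℝ≥0∞, Measurable w → ∀ t,
        Measurable fun y => w (Φ (t, y)) := by
      intro w hw t
      exact hw.comp (Φ.measurable.comp measurable_prodMk_left)
    have mi : ∀ w : (Fin (m + 1) → ℝ) → ℝ≥0∞, Measurable w →
        Measurable fun t => ∫⁻ y : Fin m → ℝ, w (Φ (t, y)) := by
      intro w hw
      exact Measurable.lintegral_prod_right (hw.comp Φ.measurable)
    rw [e u hu, e v hv, e h hh]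
    refine pl_one ha ha1 (mi u hu) (mi v hv) (mi h hh) fun s t => ?_
    refine pl_pi ha ha1 m (ms u hu s) (ms v hv t) (ms h hh _) fun x y => ?_
    refine (H _ _).trans (le_of_eq ?_)
    congr 1
    ext i
    refine Fin.cases ?_ (fun j => ?_) i <;> simp [Φ, MeasurableEquiv.piFinSuccAbove]

/-- Log-concavity of an extended nonnegative function. -/
def LC {E : Type*} [AddCommGroup E] [Module ℝ E] (G : E → ℝ≥0∞) : Prop :=
  ∀ a : ℝ, 0 < a → a < 1 → ∀ x y, G x ^ a * G y ^ (1 - a) ≤ G (a • x + (1 - a) • y)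

/-- Peakedness comparison. -/
def Peak (f f' : ℝ → ℝ≥0∞) : Prop :=
  ∀ g : ℝ → ℝ≥0∞, Measurable g → (∀ s t, |s| ≤ |t| → g t ≤ g s) →
    ∫⁻ t, f t * g t ≤ ∫⁻ t, f' t * g t

theorem marg_mono {m : ℕ} {F : ℝ × (Fin m → ℝ) → ℝ≥0∞} (hF : Measurable F) (hlc : LC F)
    (hev : ∀ x, F (-x) = F x) (s t : ℝ) (hst : |s| ≤ |t|) :
    ∫⁻ y, F (t, y) ≤ ∫⁻ y, F (s, y) := by
  have even : ∀ t, ∫⁻ y, F (-t, y) = ∫⁻ y, F (t, y) := by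
    intro t
    have hms : Measurable fun y => F (-t, y) := hF.comp measurable_prodMk_left
    rw [← (Measure.measurePreserving_neg (volume : Measure (Fin m → ℝ))).lintegral_comp hms]
    refine lintegral_congr fun y => ?_
    rw [← hev (t, y)]; rfl
  rcases eq_or_lt_of_le hst with h | h
  · rcases abs_eq_abs.mp h with h | h
    · rw [h]
    · rw [h, even]
  have ht : t ≠ 0 := by
    rintro rfl
    simp at h
    exact absurd h (not_lt.mpr (abs_nonneg s))
  have hr : |s / t| < 1 := by
    rw [abs_div, div_lt_one (abs_pos.mpr ht)]; exact h
  obtain ⟨h1, h2⟩ := abs_lt.mp hr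
  have key := pl_pi (a := (1 + s / t) / 2) (by linarith) (by linarith) m
    (u := fun y => F (t, y)) (v := fun y => F (-t, y)) (h := fun y => F (s, y))
    (hF.comp measurable_prodMk_left) (hF.comp measurable_prodMk_left)
    (hF.comp measurable_prodMk_left) (by
      intro x y
      refine (hlc _ (by linarith) (by linarith) (t, x) (-t, y)).trans (le_of_eq ?_)
      congr 1
      ext1
      · simp; field_simp; ring
      · simp)
  rw [even, ← ENNReal.rpow_add_of_nonneg _ _ (by linarith) (by linarith)] at key
  simpa using key

theorem one_step {E : Type*} [NormedAddCommGroup E] [NormedSpace ℝ E] [FiniteDimensional ℝ E]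
    [MeasurableSpace E] [BorelSpace E] (μ : Measure E) [μ.IsAddHaarMeasure] (l : E →ₗ[ℝ] ℝ)
    {f f' : ℝ → ℝ≥0∞} (hf : Measurable f) (hf' : Measurable f') (h0 : f 0 ≤ f' 0)
    (hpk : Peak f f') {G : E → ℝ≥0∞} (hG : Measurable G) (hlc : LC G) (hev : ∀ x, G (-x) = G x) :
    ∫⁻ x, f (l x) * G x ∂μ ≤ ∫⁻ x, f' (l x) * G x ∂μ := by
  by_cases hl : l = 0
  · subst hl
    refine lintegral_mono fun x => ?_
    simp only [LinearMap.zero_apply]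
    gcongr
  obtain ⟨v0, hv0⟩ : ∃ v, l v ≠ 0 := by
    by_contra hcon
    push Not at hcon
    exact hl (LinearMap.ext hcon)
  obtain ⟨v, hv⟩ : ∃ v, l v = 1 := ⟨(l v0)⁻¹ • v0, by simp [hv0]⟩
  let K := LinearMap.ker l
  let m := Module.finrank ℝ K
  let e : K ≃ₗ[ℝ] (Fin m → ℝ) := (Module.finBasis ℝ K).equivFun
  let Φ₀ : (ℝ × (Fin m → ℝ)) →ₗ[ℝ] E :=
    (LinearMap.toSpanSingleton ℝ E v).coprod (K.subtype ∘ₗ e.symm.toLinearMap)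
  have hΦ₀ : ∀ t y, Φ₀ (t, y) = t • v + (e.symm y : E) := fun t y => by
    simp [Φ₀]
  have hlΦ : ∀ t y, l (Φ₀ (t, y)) = t := fun t y => by
    have : l (e.symm y : E) = 0 := (e.symm y).2
    rw [hΦ₀, map_add, map_smul, hv, this]; simp
  have hbij : Function.Bijective Φ₀ := by
    constructor
    · rw [← LinearMap.ker_eq_bot, LinearMap.ker_eq_bot']
      rintro ⟨t, y⟩ h
      have ht : t = 0 := by rw [← hlΦ t y, h, map_zero]
      subst ht
      rw [hΦ₀] at h
      have : e.symm y = 0 := by ext; simpa using h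
      have : y = 0 := by simpa using this
      simp [this]
    · intro x
      have hx : x - l x • v ∈ K := by simp [K, hv]
      refine ⟨(l x, e ⟨_, hx⟩), ?_⟩
      rw [hΦ₀]; simp
  let Φ : (ℝ × (Fin m → ℝ)) ≃L[ℝ] E := (LinearEquiv.ofBijective Φ₀ hbij).toContinuousLinearEquiv
  have hΦ : ∀ x, Φ x = Φ₀ x := fun x => rfl
  let ν : Measure E := Measure.map Φ (volume.prod volume)
  have : ν.IsAddHaarMeasure := ContinuousLinearEquiv.isAddHaarMeasure_map Φ _
  obtain ⟨c, hc⟩ : ∃ c : NNReal, μ = c • ν := ⟨_, Measure.isAddLeftInvariant_eq_smul μ ν⟩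
  have hlm : Measurable l := l.continuous_of_finiteDimensional.measurable
  have hFm : Measurable fun x => G (Φ x) := hG.comp Φ.continuous.measurable
  have hI : ∀ w : ℝ → ℝ≥0∞, Measurable w → ∫⁻ x, w (l x) * G x ∂μ =
      c * ∫⁻ t : ℝ, w t * ∫⁻ y : Fin m → ℝ, G (Φ (t, y)) := by
    intro w hw
    rw [hc, lintegral_smul_measure, ENNReal.smul_def, smul_eq_mul]
    congr 1
    have hwm : Measurable fun x => w (l x) * G x := (hw.comp hlm).mul hG
    rw [lintegral_map hwm Φ.continuous.measurable, lintegral_prod]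
    · refine lintegral_congr fun t => ?_
      rw [← lintegral_const_mul]
      · refine lintegral_congr fun y => ?_
        rw [hΦ, hlΦ]
      · exact hFm.comp measurable_prodMk_left
    · exact (hwm.comp Φ.continuous.measurable).aemeasurable
  rw [hI f hf, hI f' hf']
  refine mul_le_mul_right ?_ _
  refine hpk _ (Measurable.lintegral_prod_right' (ν := (volume : Measure (Fin m → ℝ))) hFm) ?_
  intro s t hst
  refine marg_mono (F := fun x => G (Φ x)) hFm ?_ ?_ s t hst
  · intro a ha ha1 x y
    simp only [map_add, map_smul]
    exact hlc a ha ha1 _ _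
  · intro x
    rw [map_neg, hev]

theorem LC.comp {E : Type*} [AddCommGroup E] [Module ℝ E] {f : ℝ → ℝ≥0∞} (hf : LC f)
    (l : E →ₗ[ℝ] ℝ) : LC fun x => f (l x) := by
  intro a ha ha1 x y
  simp only [map_add, map_smul]
  exact hf a ha ha1 _ _

theorem LC.prod {E ι : Type*} [AddCommGroup E] [Module ℝ E] (S : Finset ι) (F : ι → E → ℝ≥0∞)
    (hF : ∀ i, LC (F i)) : LC fun x => ∏ i ∈ S, F i x := by
  intro a ha ha1 x y
  simp only
  rw [← ENNReal.prod_rpow_of_nonneg ha.le, ← ENNReal.prod_rpow_of_nonneg (by linarith),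
    ← Finset.prod_mul_distrib]
  exact Finset.prod_le_prod' fun i _ => hF i a ha ha1 x y

theorem chain {E : Type*} [NormedAddCommGroup E] [NormedSpace ℝ E] [FiniteDimensional ℝ E]
    [MeasurableSpace E] [BorelSpace E] (μ : Measure E) [μ.IsAddHaarMeasure] {n : ℕ}
    (l : Fin n → E →ₗ[ℝ] ℝ)
    {f f' : ℝ → ℝ≥0∞} (hf : Measurable f) (hf' : Measurable f') (h0 : f 0 ≤ f' 0)
    (hpk : Peak f f') (hlc : LC f) (hlc' : LC f') (hev : ∀ x, f (-x) = f x)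
    (hev' : ∀ x, f' (-x) = f' x) :
    ∫⁻ x, ∏ i, f (l i x) ∂μ ≤ ∫⁻ x, ∏ i, f' (l i x) ∂μ := by
  have hlm : ∀ i, Measurable (l i) := fun i => (l i).continuous_of_finiteDimensional.measurable
  have key : ∀ S : Finset (Fin n), ∫⁻ x, ∏ i, f (l i x) ∂μ ≤
      ∫⁻ x, ∏ i, (if i ∈ S then f' else f) (l i x) ∂μ := by
    intro S
    induction S using Finset.induction_on with
    | empty => simp
    | insert j S hj ih =>
      refine ih.trans ?_
      have e1 : ∀ x, ∏ i, (if i ∈ S then f' else f) (l i x) = f (l j x) *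
          ∏ i ∈ Finset.univ.erase j, (if i ∈ S then f' else f) (l i x) := by
        intro x
        rw [← Finset.mul_prod_erase _ _ (Finset.mem_univ j), if_neg hj]
      have e2 : ∀ x, ∏ i, (if i ∈ insert j S then f' else f) (l i x) = f' (l j x) *
          ∏ i ∈ Finset.univ.erase j, (if i ∈ S then f' else f) (l i x) := by
        intro x
        rw [← Finset.mul_prod_erase _ _ (Finset.mem_univ j), if_pos (Finset.mem_insert_self _ _)]
        congr 1
        refine Finset.prod_congr rfl fun i hi => ?_
        have : i ≠ j := (Finset.mem_erase.mp hi).1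
        simp [Finset.mem_insert, this]
      simp only [e1, e2]
      refine one_step μ (l j) hf hf' h0 hpk ?_ ?_ ?_
      · refine Finset.measurable_prod _ fun i _ => ?_
        split_ifs
        · exact hf'.comp (hlm i)
        · exact hf.comp (hlm i)
      · refine LC.prod _ (fun i x => (if i ∈ S then f' else f) (l i x)) fun i => ?_
        split_ifs
        · exact hlc'.comp _
        · exact hlc.comp _
      · intro x
        refine Finset.prod_congr rfl fun i _ => ?_
        rw [map_neg]
        split_ifs
        · exact hev' _
        · exact hev _
  simpa using key Finset.univ

theorem peak_of_cross {f f' : ℝ → ℝ≥0∞} (hf : Measurable f) (hf' : Measurable f')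
    (h1 : ∫⁻ t, f t = 1) (h1' : ∫⁻ t, f' t = 1) {t0 : ℝ} (ht0 : 0 < t0) (hpos : ∀ t, f t ≠ 0)
    (hle : ∀ t, |t| ≤ t0 → f t ≤ f' t) (hge : ∀ t, t0 < |t| → f' t ≤ f t) : Peak f f' := by
  intro g hg hmono
  by_cases hc : g t0 = ∞
  · by_cases hfin : ∫⁻ t, f' t * g t = ∞
    · rw [hfin]; exact le_top
    exfalso
    have hae := ae_lt_top (hf'.mul hg) hfin
    have hz : volume (Set.Icc (-t0) t0) = 0 := by
      refine measure_mono_null ?_ (ae_iff.mp hae)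
      intro t ht
      have ht' : |t| ≤ t0 := abs_le.mpr ht
      have hgt : g t = ∞ := by
        have := hmono t t0 (by rwa [abs_of_pos ht0])
        rw [hc] at this
        exact top_le_iff.mp this
      have hft : f' t ≠ 0 := fun h => hpos t (le_zero_iff.mp (h ▸ hle t ht'))
      simp [hgt, ENNReal.mul_top hft]
    rw [Real.volume_Icc] at hz
    simp at hz
    linarith
  · have hpt : ∀ t, f t * g t + f' t * g t0 ≤ f' t * g t + f t * g t0 := by
      intro t
      by_cases ht : |t| ≤ t0
      · obtain ⟨d, hd⟩ := exists_add_of_le (hle t ht)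
        obtain ⟨e, he⟩ := exists_add_of_le (hmono t t0 (by rwa [abs_of_pos ht0]))
        rw [hd, he]
        calc _ ≤ f t * (g t0 + e) + (f t + d) * g t0 + d * e := le_self_add
          _ = _ := by ring
      · push Not at ht
        obtain ⟨d, hd⟩ := exists_add_of_le (hge t ht)
        obtain ⟨e, he⟩ := exists_add_of_le (hmono t0 t (by rw [abs_of_pos ht0]; exact ht.le))
        rw [hd, he]
        calc _ ≤ (f' t + d) * g t + f' t * (g t + e) + d * e := le_self_add
          _ = _ := by ring
    have hint := lintegral_mono (μ := volume) hpt
    have hm1 : Measurable fun t => f t * g t := hf.mul hg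
    have hm2 : Measurable fun t => f' t * g t := hf'.mul hg
    rw [lintegral_add_left hm1, lintegral_add_left hm2,
      lintegral_mul_const _ hf, lintegral_mul_const _ hf', h1, h1', one_mul] at hint
    exact (ENNReal.add_le_add_iff_right hc).mp hint

theorem mp_rpow_le_one_iff {x y : ℝ} (hx : 0 ≤ x) (hy : 0 < y) : x ^ y ≤ 1 ↔ x ≤ 1 := by
  constructor
  · intro h
    by_contra hcon
    push Not at hcon
    exact absurd h (not_le.mpr (Real.one_lt_rpow hcon hy))
  · intro h; exact Real.rpow_le_one hx h hy.le

/-- The normalising constant. -/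
noncomputable def cst (p : ℝ) : ℝ := 2 * Real.Gamma (1 / p + 1)

theorem cst_pos {p : ℝ} (hp : 1 ≤ p) : 0 < cst p := by
  have : 0 < 1 / p + 1 := by positivity
  have := Real.Gamma_pos_of_pos this
  unfold cst; positivity

/-- The normalised density. -/
noncomputable def phi (p : ℝ≥0∞) (t : ℝ) : ℝ≥0∞ :=
  if p = ∞ then (if |t| ≤ 1 / 2 then 1 else 0)
  else ENNReal.ofReal (Real.exp (-(cst p.toReal * |t|) ^ p.toReal))

theorem phi_zero {p : ℝ≥0∞} (hp : 1 ≤ p) : phi p 0 = 1 := by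
  unfold phi
  split_ifs with h h2
  · rfl
  · simp at h2
  · have : p.toReal ≠ 0 := (ENNReal.toReal_pos (by positivity) h).ne'
    simp [Real.zero_rpow this]

theorem phi_neg (p : ℝ≥0∞) (t : ℝ) : phi p (-t) = phi p t := by
  unfold phi; simp

theorem phi_measurable (p : ℝ≥0∞) : Measurable (phi p) := by
  unfold phi
  split_ifs with h
  · refine Measurable.ite ?_ measurable_const measurable_const
    exact measurableSet_le (by fun_prop) measurable_const
  · fun_prop

theorem one_le_toReal {p : ℝ≥0∞} (hp : 1 ≤ p) (h : p ≠ ∞) : 1 ≤ p.toReal := by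
  have := ENNReal.toReal_mono h hp
  simpa using this

theorem phi_lc {p : ℝ≥0∞} (hp : 1 ≤ p) : LC (phi p) := by
  intro a ha ha1 x y
  have hb : 0 < 1 - a := by linarith
  have habs : |a • x + (1 - a) • y| ≤ a * |x| + (1 - a) * |y| := by
    refine (abs_add_le _ _).trans (le_of_eq ?_)
    simp [abs_mul, abs_of_pos ha, abs_of_pos hb]
  by_cases h : p = ∞
  · simp only [phi, h, if_true]
    by_cases hx : |x| ≤ 1 / 2
    · by_cases hy : |y| ≤ 1 / 2
      · rw [if_pos hx, if_pos hy, if_pos]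
        · simp
        · nlinarith
      · rw [if_neg hy, ENNReal.zero_rpow_of_pos hb, mul_zero]; exact zero_le
    · rw [if_neg hx, ENNReal.zero_rpow_of_pos ha, zero_mul]; exact zero_le
  · have hP := one_le_toReal hp h
    simp only [phi, h, if_false]
    set P := p.toReal
    have hc := cst_pos hP
    rw [ENNReal.ofReal_rpow_of_pos (Real.exp_pos _), ENNReal.ofReal_rpow_of_pos (Real.exp_pos _),
      ← ENNReal.ofReal_mul (by positivity)]
    apply ENNReal.ofReal_le_ofReal
    rw [← Real.exp_mul, ← Real.exp_mul, ← Real.exp_add]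
    apply Real.exp_le_exp.mpr
    have h1 : (cst P * |a • x + (1 - a) • y|) ^ P ≤
        (a * (cst P * |x|) + (1 - a) * (cst P * |y|)) ^ P := by
      apply Real.rpow_le_rpow (by positivity) _ (by linarith)
      nlinarith
    have h2 := (convexOn_rpow hP).2 (x := cst P * |x|) (y := cst P * |y|)
      (Set.mem_Ici.mpr (by positivity)) (Set.mem_Ici.mpr (by positivity)) ha.le hb.le (by ring)
    simp only [smul_eq_mul] at h2
    linarith

theorem section_finite {E : Type*} [NormedAddCommGroup E] [NormedSpace ℝ E] [FiniteDimensional ℝ E]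
    [MeasurableSpace E] [BorelSpace E] (μ : Measure E) [μ.IsAddHaarMeasure] [Nontrivial E] {n : ℕ}
    (l : Fin n → E →ₗ[ℝ] ℝ) (hl : ∀ x, (∀ i, l i x = 0) → x = 0) {P : ℝ} (hP : 1 ≤ P) {c : ℝ}
    (hc : 0 < c) :
    μ {x | ∑ i, |l i x| ^ P ≤ 1} =
      (∫⁻ x, ∏ i, ENNReal.ofReal (Real.exp (-(c * |l i x|) ^ P)) ∂μ) *
       ENNReal.ofReal (c ^ Module.finrank ℝ E / Real.Gamma (Module.finrank ℝ E / P + 1)) ∧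
      ∫⁻ x, ∏ i, ENNReal.ofReal (Real.exp (-(c * |l i x|) ^ P)) ∂μ ≠ ∞ := by
  have hP0 : 0 < P := by linarith
  have hs0 : ∀ x, 0 ≤ ∑ i, |l i x| ^ P := fun x => by positivity
  let g : E → ℝ := fun x => c * (∑ i, |l i x| ^ P) ^ (1 / P)
  have hgdef : ∀ x, g x = c * (∑ i, |l i x| ^ P) ^ (1 / P) := fun x => rfl
  have hg1 : g 0 = 0 := by
    simp [hgdef, Real.zero_rpow hP0.ne', Real.zero_rpow (inv_ne_zero hP0.ne')]
  have hg2 : ∀ x, g (-x) = g x := by intro x; simp [hgdef]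
  have hg3 : ∀ x y, g (x + y) ≤ g x + g y := by
    intro x y
    rw [hgdef, hgdef, hgdef, ← mul_add]
    gcongr
    simpa using Real.Lp_add_le Finset.univ (fun i => l i x) (fun i => l i y) hP
  have hg4 : ∀ {x}, g x = 0 → x = 0 := by
    intro x hx
    rw [hgdef, mul_eq_zero, or_iff_right hc.ne',
      Real.rpow_eq_zero (hs0 x) (by positivity), Finset.sum_eq_zero_iff_of_nonneg
        (fun i _ => by positivity)] at hx
    refine hl x fun i => ?_
    have := hx i (Finset.mem_univ i)
    rwa [Real.rpow_eq_zero (abs_nonneg _) hP0.ne', abs_eq_zero] at this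
  have hghom : ∀ (r : ℝ) x, g (r • x) = |r| * g x := by
    intro r x
    rw [hgdef, hgdef]
    have : ∑ i, |l i (r • x)| ^ P = |r| ^ P * ∑ i, |l i x| ^ P := by
      rw [Finset.mul_sum]
      refine Finset.sum_congr rfl fun i _ => ?_
      rw [map_smul, smul_eq_mul, abs_mul, Real.mul_rpow (abs_nonneg _) (abs_nonneg _)]
    rw [this, Real.mul_rpow (by positivity) (hs0 x), ← Real.rpow_mul (abs_nonneg _),
      mul_one_div_cancel hP0.ne', Real.rpow_one]
    ring
  have hg5 : ∀ (r : ℝ) x, g (r • x) ≤ |r| * g x := fun r x => (hghom r x).le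
  have hgp : ∀ x, (g x) ^ P = ∑ i, (c * |l i x|) ^ P := by
    intro x
    rw [hgdef, Real.mul_rpow hc.le (Real.rpow_nonneg (hs0 x) _), ← Real.rpow_mul (hs0 x),
      one_div_mul_cancel hP0.ne', Real.rpow_one, Finset.mul_sum]
    refine Finset.sum_congr rfl fun i _ => ?_
    rw [Real.mul_rpow hc.le (abs_nonneg _)]
  have hprod : ∀ x, ∏ i, ENNReal.ofReal (Real.exp (-(c * |l i x|) ^ P)) =
      ENNReal.ofReal (Real.exp (-(g x) ^ P)) := by
    intro x
    rw [← ENNReal.ofReal_prod_of_nonneg (fun i _ => (Real.exp_pos _).le), ← Real.exp_sum, hgp,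
      Finset.sum_neg_distrib]
  simp only [hprod]
  have A := measure_lt_one_eq_integral_div_gamma μ hg1 hg2 hg3 hg4 hg5 hP0
  have B := measure_le_eq_lt μ hg1 hg2 hg3 hg4 hg5 1
  have hset : {x | ∑ i, |l i x| ^ P ≤ 1} = (fun x => c⁻¹ • x) ⁻¹' {x | g x ≤ 1} := by
    ext x
    simp only [Set.mem_preimage, Set.mem_ofPred_eq]
    rw [hghom, abs_of_pos (inv_pos.mpr hc), hgdef, inv_mul_cancel_left₀ hc.ne']
    constructor
    · intro h; exact Real.rpow_le_one (hs0 x) h (by positivity)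
    · intro h
      by_contra hcon
      push Not at hcon
      exact absurd h (not_le.mpr (Real.one_lt_rpow hcon (by positivity)))
  have hC := Measure.addHaar_preimage_smul μ (inv_ne_zero hc.ne') {x | g x ≤ 1}
  have hG : 0 < Real.Gamma (Module.finrank ℝ E / P + 1) := Real.Gamma_pos_of_pos (by positivity)
  have hgcont : Continuous g := by
    have : ∀ i, Continuous (l i) := fun i => (l i).continuous_of_finiteDimensional
    refine continuous_const.mul (Continuous.rpow_const ?_ fun x => Or.inr (by positivity))
    exact continuous_finsetSum _ fun i _ => Continuous.rpow_const (this i).abs fun x => Or.inr hP0.le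
  have hint : Integrable (fun x => Real.exp (-(g x) ^ P)) μ := by
    by_contra hni
    rw [integral_undef hni] at A
    have hopen : IsOpen {x | g x < 1} := isOpen_lt hgcont continuous_const
    have := hopen.measure_pos μ ⟨0, by simp [hg1]⟩
    rw [A] at this
    simp at this
  have hlint := ofReal_integral_eq_lintegral_ofReal hint
    (Filter.Eventually.of_forall fun x => (Real.exp_pos _).le)
  rw [← hlint]
  refine ⟨?_, ENNReal.ofReal_ne_top⟩
  rw [hset, hC, B, A, ← ENNReal.ofReal_mul (by positivity), ← ENNReal.ofReal_mul
    (integral_nonneg fun x => (Real.exp_pos _).le)]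
  congr 1
  rw [inv_pow, inv_inv, abs_of_pos (by positivity)]
  ring

theorem section_top {E : Type*} [NormedAddCommGroup E] [NormedSpace ℝ E] [FiniteDimensional ℝ E]
    [MeasurableSpace E] [BorelSpace E] (μ : Measure E) [μ.IsAddHaarMeasure] {n : ℕ}
    (l : Fin n → E →ₗ[ℝ] ℝ) (hl : ∀ x, (∀ i, l i x = 0) → x = 0) :
    μ {x | ∀ i, |l i x| ≤ 1} =
      (∫⁻ x, ∏ i, phi ∞ (l i x) ∂μ) * ENNReal.ofReal (2 ^ Module.finrank ℝ E) ∧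
      ∫⁻ x, ∏ i, phi ∞ (l i x) ∂μ ≠ ∞ := by
  have hcont : ∀ i, Continuous (l i) := fun i => (l i).continuous_of_finiteDimensional
  have hcl : IsClosed {x | ∀ i, |l i x| ≤ 1 / 2} := by
    simp only [Set.ofPred_forall]
    exact isClosed_iInter fun i => isClosed_le (hcont i).abs continuous_const
  have hprod : ∀ x, ∏ i, phi ∞ (l i x) = {x | ∀ i, |l i x| ≤ 1 / 2}.indicator 1 x := by
    intro x
    by_cases hx : ∀ i, |l i x| ≤ 1 / 2
    · rw [Set.indicator_of_mem (by exact hx)]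
      simp only [phi, if_true, if_pos (hx _)]
      simp
    · rw [Set.indicator_of_notMem (by exact hx)]
      push Not at hx
      obtain ⟨i, hi⟩ := hx
      refine Finset.prod_eq_zero (Finset.mem_univ i) ?_
      simp only [phi, if_true, if_neg hi.not_ge]
  simp only [hprod]
  rw [lintegral_indicator_one hcl.measurableSet]
  have hset : {x | ∀ i, |l i x| ≤ 1} = (fun x => (2⁻¹ : ℝ) • x) ⁻¹' {x | ∀ i, |l i x| ≤ 1 / 2} := by
    ext x
    simp only [Set.mem_preimage, Set.mem_ofPred_eq, map_smul, smul_eq_mul, abs_mul]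
    refine forall_congr' fun i => ?_
    rw [abs_of_pos (by norm_num : (0 : ℝ) < 2⁻¹)]
    constructor <;> intro h <;> linarith
  constructor
  · rw [hset, Measure.addHaar_preimage_smul μ (by norm_num : (2⁻¹ : ℝ) ≠ 0), mul_comm]
    congr 2
    rw [inv_pow, inv_inv, abs_of_pos (by positivity)]
  · -- boundedness via the linear embedding
    let L : E →ₗ[ℝ] (Fin n → ℝ) := LinearMap.pi l
    have hLk : LinearMap.ker L = ⊥ := by
      rw [LinearMap.ker_eq_bot']
      intro x hx
      exact hl x fun i => congrFun hx i
    have hemb := LinearMap.isClosedEmbedding_of_injective hLk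
    have hcpt : IsCompact (L ⁻¹' (Metric.closedBall 0 (1 / 2))) :=
      hemb.isCompact_preimage (isCompact_closedBall _ _)
    refine ((measure_mono ?_).trans_lt hcpt.measure_lt_top).ne
    intro x hx
    simp only [Set.mem_preimage, mem_closedBall_zero_iff]
    rw [pi_norm_le_iff_of_nonneg (by norm_num)]
    intro i
    exact hx i

theorem phi_integral {p : ℝ≥0∞} (hp : 1 ≤ p) : ∫⁻ t, phi p t = 1 := by
  by_cases h : p = ∞
  · have := (section_top (volume : Measure ℝ) (fun _ : Fin 1 => LinearMap.id) (by simp)).1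
    have e : {x : ℝ | |x| ≤ 1} = Set.Icc (-1) 1 := by
      ext x; simp [abs_le]
    rw [h]
    have h2 : (2 : ℝ≥0∞) = (∫⁻ t, phi ∞ t) * 2 := by
      have h4 : volume {x : ℝ | |x| ≤ 1} = 2 := by
        rw [e, Real.volume_Icc]; norm_num
      refine h4.symm.trans ?_
      simpa using this
    have h3 : 1 * (2 : ℝ≥0∞) = (∫⁻ t, phi ∞ t) * 2 := by rwa [one_mul]
    exact ((ENNReal.mul_left_inj (by simp) (by simp)).mp h3).symm
  · have hP := one_le_toReal hp h
    have := (section_finite (volume : Measure ℝ) (fun _ : Fin 1 => LinearMap.id) (by simp) hP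
      (cst_pos hP)).1
    have e : {x : ℝ | |x| ^ p.toReal ≤ 1} = Set.Icc (-1) 1 := by
      ext x
      simp only [Set.mem_ofPred_eq, Set.mem_Icc, ← abs_le]
      rw [mp_rpow_le_one_iff (abs_nonneg x) (by linarith)]
    have hG : 0 < Real.Gamma (1 / p.toReal + 1) := Real.Gamma_pos_of_pos (by positivity)
    have e2 : cst p.toReal / Real.Gamma (1 / p.toReal + 1) = 2 := by
      unfold cst; field_simp
    simp only [LinearMap.id_coe, id_eq, Finset.univ_unique, Finset.sum_singleton,
      Finset.prod_singleton, Module.finrank_self, pow_one, Nat.cast_one, e, e2, Real.volume_Icc] at this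
    simp only [phi, h, if_false]
    have h2 : ENNReal.ofReal (1 - -1) = 1 * ENNReal.ofReal 2 := by norm_num
    rw [h2] at this
    exact ((ENNReal.mul_left_inj (by simp) (by simp)).mp this).symm

theorem phi_peak {p q : ℝ≥0∞} (hp : 1 ≤ p) (hpq : p ≤ q) : Peak (phi p) (phi q) := by
  rcases eq_or_lt_of_le hpq with rfl | hlt
  · intro g _ _; exact le_rfl
  have hpt : p ≠ ∞ := hlt.ne_top
  have hq : 1 ≤ q := hp.trans hpq
  have hP := one_le_toReal hp hpt
  have hc := cst_pos hP
  have hpos : ∀ t, phi p t ≠ 0 := by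
    intro t
    simp only [phi, hpt, if_false]
    simp [Real.exp_pos]
  by_cases hqt : q = ∞
  · refine peak_of_cross (phi_measurable p) (phi_measurable q) (phi_integral hp) (phi_integral hq)
      (t0 := 1 / 2) (by norm_num) hpos ?_ ?_
    · intro t ht
      simp only [phi, hpt, hqt, if_false, if_true, if_pos ht]
      rw [ENNReal.ofReal_le_one, Real.exp_le_one_iff]
      simp only [Left.neg_nonpos_iff]
      positivity
    · intro t ht
      simp only [phi, hqt, if_true, if_neg ht.not_ge]
      exact zero_le
  · have hQ := one_le_toReal hq hqt
    have hcq := cst_pos hQ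
    have hPQ : p.toReal < q.toReal := (ENNReal.toReal_lt_toReal hpt hqt).mpr hlt
    set P := p.toReal with hPd
    set Q := q.toReal with hQd
    set R := cst P ^ P / cst Q ^ Q with hR
    have hRpos : 0 < R := by positivity
    have hQP : 0 < Q - P := by linarith
    set t0 := R ^ (1 / (Q - P)) with ht0
    have ht0pos : 0 < t0 := by positivity
    have ht0R : t0 ^ (Q - P) = R := by
      rw [ht0, ← Real.rpow_mul hRpos.le, one_div_mul_cancel hQP.ne', Real.rpow_one]
    have eP : ∀ x : ℝ, 0 ≤ x → (cst P * x) ^ P = cst Q ^ Q * x ^ P * R := by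
      intro x hx
      rw [Real.mul_rpow hc.le hx, hR]
      field_simp
    have eQ : ∀ x : ℝ, 0 ≤ x → (cst Q * x) ^ Q = cst Q ^ Q * x ^ P * x ^ (Q - P) := by
      intro x hx
      rw [Real.mul_rpow hcq.le hx, mul_assoc, ← Real.rpow_add_of_nonneg hx (by linarith) hQP.le]
      congr 2
      ring
    refine peak_of_cross (phi_measurable p) (phi_measurable q) (phi_integral hp) (phi_integral hq)
      ht0pos hpos ?_ ?_
    · intro t ht
      simp only [phi, hpt, hqt, if_false]
      apply ENNReal.ofReal_le_ofReal
      apply Real.exp_le_exp.mpr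
      rw [← hPd, ← hQd, neg_le_neg_iff, eP _ (abs_nonneg t), eQ _ (abs_nonneg t)]
      gcongr
      rw [← ht0R]
      gcongr
    · intro t ht
      simp only [phi, hpt, hqt, if_false]
      apply ENNReal.ofReal_le_ofReal
      apply Real.exp_le_exp.mpr
      rw [← hPd, ← hQd, neg_le_neg_iff, eP _ (abs_nonneg t), eQ _ (abs_nonneg t)]
      gcongr
      rw [← ht0R]
      gcongr

theorem vol_lpBall {k : ℕ} (hk : 0 < k) {p : ℝ≥0∞} (hp : 1 ≤ p) : volume (lpBall k p) =
    if p = ∞ then ENNReal.ofReal (2 ^ k) else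
      ENNReal.ofReal (cst p.toReal ^ k / Real.Gamma (k / p.toReal + 1)) := by
  have : Nonempty (Fin k) := ⟨⟨0, hk⟩⟩
  have hmp := (PiLp.volume_preserving_toLp (Fin k))
  rw [← hmp.measure_preimage_emb (MeasurableEquiv.toLp 2 (Fin k → ℝ)).measurableEmbedding]
  by_cases h : p = ∞
  · simp only [lpBall, h, if_true]
    have : (WithLp.toLp 2 ⁻¹' {x : EuclideanSpace ℝ (Fin k) | ∀ i, |x i| ≤ 1}) =
        Set.Icc (fun _ => -1) (fun _ => 1) := by
      ext x
      simp [abs_le, Set.mem_Icc, Pi.le_def, forall_and]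
    rw [this, Real.volume_Icc_pi]
    norm_num
  · simp only [lpBall, h, if_false]
    have hP := one_le_toReal hp h
    have := volume_sum_rpow_le (Fin k) hP 1
    simp only [Fintype.card_fin, ENNReal.ofReal_one, one_pow, one_mul] at this
    rw [cst, ← this]
    congr 1
    ext x
    simp only [Set.mem_preimage, Set.mem_ofPred_eq]
    rw [mp_rpow_le_one_iff (by positivity) (by positivity)]

theorem section_ratio {E : Type*} [NormedAddCommGroup E] [NormedSpace ℝ E] [FiniteDimensional ℝ E]
    [MeasurableSpace E] [BorelSpace E] (μ : Measure E) [μ.IsAddHaarMeasure] {n k : ℕ} (hk : 0 < k)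
    (hE : Module.finrank ℝ E = k)
    (l : Fin n → E →ₗ[ℝ] ℝ) (hl : ∀ x, (∀ i, l i x = 0) → x = 0) {p : ℝ≥0∞} (hp : 1 ≤ p) :
    (μ {x | WithLp.toLp 2 (fun i => l i x) ∈ lpBall n p}).toReal / (volume (lpBall k p)).toReal =
      (∫⁻ x, ∏ i, phi p (l i x) ∂μ).toReal ∧ ∫⁻ x, ∏ i, phi p (l i x) ∂μ ≠ ∞ := by
  have : Nontrivial E := Module.nontrivial_of_finrank_pos (R := ℝ) (by rw [hE]; exact hk)
  rw [vol_lpBall hk hp]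
  by_cases h : p = ∞
  · subst h
    obtain ⟨h1, h2⟩ := section_top μ l hl
    refine ⟨?_, h2⟩
    simp only [lpBall, if_true, Set.mem_ofPred_eq]
    rw [h1, hE, ENNReal.toReal_mul, mul_div_assoc, div_self, mul_one]
    rw [ENNReal.toReal_ofReal (by positivity)]
    positivity
  · have hP := one_le_toReal hp h
    have hc := cst_pos hP
    obtain ⟨h1, h2⟩ := section_finite μ l hl hP hc
    simp only [lpBall, h, if_false, Set.mem_ofPred_eq, phi]
    refine ⟨?_, h2⟩
    have hG : 0 < Real.Gamma (k / p.toReal + 1) := Real.Gamma_pos_of_pos (by positivity)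
    rw [h1, hE, ENNReal.toReal_mul, mul_div_assoc, div_self, mul_one]
    rw [ENNReal.toReal_ofReal (by positivity)]
    positivity

theorem meyer_pajor_sections (k n : ℕ) (hk : 0 < k) (hkn : k ≤ n)
    (U : Submodule ℝ (EuclideanSpace ℝ (Fin n))) (hU : Module.finrank ℝ U = k)
    (p q : ℝ≥0∞) (hp : 1 ≤ p) (hpq : p ≤ q) :
    (μH[(k : ℝ)] (lpBall n p ∩ (U : Set (EuclideanSpace ℝ (Fin n))))).toReal /
        (volume (lpBall k p)).toReal
      ≤ (μH[(k : ℝ)] (lpBall n q ∩ (U : Set (EuclideanSpace ℝ (Fin n))))).toReal /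
        (volume (lpBall k q)).toReal := by
  have hq : 1 ≤ q := hp.trans hpq
  let l : Fin n → U →ₗ[ℝ] ℝ := fun i => (EuclideanSpace.proj i).toLinearMap ∘ₗ U.subtype
  have hlx : ∀ i (x : U), l i x = (x : EuclideanSpace ℝ (Fin n)) i := fun i x => rfl
  have hl : ∀ x, (∀ i, l i x = 0) → x = 0 := by
    intro x hx
    ext i
    exact hx i
  let μ : Measure U := μH[(k : ℝ)]
  have hμ : μ.IsAddHaarMeasure := by
    have : (μH[(Module.finrank ℝ U : ℝ)] : Measure U).IsAddHaarMeasure :=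
      isAddHaarMeasure_hausdorffMeasure
    rwa [hU] at this
  have hset : ∀ r, μH[(k : ℝ)] (lpBall n r ∩ (U : Set (EuclideanSpace ℝ (Fin n)))) =
      μ {x | WithLp.toLp 2 (fun i => l i x) ∈ lpBall n r} := by
    intro r
    have hiso : Isometry (Subtype.val : U → EuclideanSpace ℝ (Fin n)) := isometry_subtype_coe
    rw [← hiso.hausdorffMeasure_image (Or.inl (by positivity))]
    congr 1
    ext x
    constructor
    · rintro ⟨h1, h2⟩
      exact ⟨⟨x, h2⟩, h1, rfl⟩
    · rintro ⟨y, hy, rfl⟩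
      exact ⟨hy, y.2⟩
  rw [hset, hset, (section_ratio μ hk hU l hl hp).1, (section_ratio μ hk hU l hl hq).1]
  refine ENNReal.toReal_mono (section_ratio μ hk hU l hl hq).2 ?_
  exact chain μ l (phi_measurable p) (phi_measurable q) (by rw [phi_zero hp, phi_zero hq])
    (phi_peak hp hpq) (phi_lc hp) (phi_lc hq) (phi_neg p) (phi_neg q)
end

section
/- Let C and B be symmetric convex bodies in ℝ^k (compact, convex, symmetric about the origin, with nonempty interior), with Minkowski gauges ‖·‖_C and ‖·‖_B respectively. Then for every p > 0, (|C| / |B|)^{1/k} ≥ ( ((k+p) / (k·|B|)) · ∫_B ‖x‖_C^p dx )^{-1/p}, where |·| denotes k-dimensional Lebesgue volume. -/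
open MeasureTheory

theorem aux_zero_mem {k : ℕ} {C : Set (EuclideanSpace ℝ (Fin k))}
    (hCconv : Convex ℝ C) (hCsym : C = -C) (hCint : (interior C).Nonempty) :
    C ∈ nhds (0 : EuclideanSpace ℝ (Fin k)) := by
  obtain ⟨x, hx⟩ := hCint
  have hx' : -x ∈ C := by
    rw [hCsym]; simpa using interior_subset hx
  have h := hCconv.openSegment_interior_self_subset_interior hx hx'
  apply mem_interior_iff_mem_nhds.1
  apply h
  refine ⟨1/2, 1/2, by norm_num, by norm_num, by norm_num, ?_⟩
  simp

open scoped Pointwise in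
theorem aux_meas {k : ℕ} {C : Set (EuclideanSpace ℝ (Fin k))}
    (hCc : IsCompact C) (hCconv : Convex ℝ C) (h0 : C ∈ nhds (0 : EuclideanSpace ℝ (Fin k)))
    (s : ℝ) (hs : 0 < s) :
    volume {x | gauge C x ≤ s} ≤ ENNReal.ofReal (s ^ k * (volume C).toReal) := by
  have hsub : {x | gauge C x ≤ s} ⊆ s • C := by
    intro x hx
    rw [Set.mem_smul_set_iff_inv_smul_mem₀ hs.ne']
    rw [← hCc.isClosed.closure_eq, ← gauge_le_one_iff_mem_closure hCconv h0,
      gauge_smul_of_nonneg (inv_nonneg.2 hs.le), smul_eq_mul, inv_mul_le_iff₀ hs, mul_one]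
    exact hx
  refine (measure_mono hsub).trans ?_
  rw [Measure.addHaar_smul, ENNReal.ofReal_mul (by positivity),
    ENNReal.ofReal_toReal hCc.measure_lt_top.ne, abs_of_nonneg (by positivity)]
  simp

theorem aux_main {k : ℕ} {C B : Set (EuclideanSpace ℝ (Fin k))}
    (hCc : IsCompact C) (hCconv : Convex ℝ C) (h0 : C ∈ nhds (0 : EuclideanSpace ℝ (Fin k)))
    (hBc : IsCompact B) (p : ℝ) (hp : 0 < p) (T : ℝ) (hT : 0 ≤ T)
    (hpos : ∀ t, 0 < t → t ≤ T → 0 ≤ (volume B).toReal - t ^ ((k:ℝ)/p) * (volume C).toReal) :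
    (∫ t in (0:ℝ)..T, ((volume B).toReal - t ^ ((k:ℝ)/p) * (volume C).toReal))
      ≤ ∫ x in B, gauge C x ^ p := by
  have hcont : Continuous (fun x => gauge C x ^ p) :=
    (continuous_gauge hCconv h0).rpow_const (fun _ => Or.inr hp.le)
  have hint : IntegrableOn (fun x => gauge C x ^ p) B := hcont.continuousOn.integrableOn_compact hBc
  have hnn : ∀ x, 0 ≤ gauge C x ^ p := fun x => Real.rpow_nonneg (gauge_nonneg x) _
  rw [← ENNReal.ofReal_le_ofReal_iff (integral_nonneg hnn),
    ofReal_integral_eq_lintegral_ofReal hint (Filter.Eventually.of_forall hnn),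
    lintegral_eq_lintegral_meas_lt _ (Filter.Eventually.of_forall hnn)
      hcont.measurable.aemeasurable,
    intervalIntegral.integral_of_le hT,
    ofReal_integral_eq_lintegral_ofReal]
  · refine le_trans ?_ (lintegral_mono_set (fun t ht => ht.1 : Set.Ioc (0:ℝ) T ⊆ Set.Ioi 0))
    refine setLIntegral_mono' measurableSet_Ioc ?_
    intro t ht
    have hs : 0 < t ^ (1/p) := Real.rpow_pos_of_pos ht.1 _
    have h1 := aux_meas hCc hCconv h0 (t ^ (1/p)) hs
    have h2 : (t ^ (1/p)) ^ k = t ^ ((k:ℝ)/p) := by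
      rw [← Real.rpow_natCast, ← Real.rpow_mul ht.1.le]; congr 1; ring
    rw [h2] at h1
    have hm : MeasurableSet {x | t < gauge C x ^ p} := (isOpen_lt continuous_const hcont).measurableSet
    rw [Measure.restrict_apply hm, ENNReal.ofReal_sub _ (by have := ht.1; positivity),
      ENNReal.ofReal_toReal hBc.measure_lt_top.ne, tsub_le_iff_right]
    refine le_trans ?_ (add_le_add_right h1 _)
    refine le_trans (measure_mono ?_) (measure_union_le _ _)
    intro x hx
    by_cases h : t < gauge C x ^ p
    · exact Or.inl ⟨h, hx⟩
    · right
      have h' := not_lt.1 h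
      have := Real.rpow_le_rpow (hnn x) h' (by positivity : 0 ≤ 1/p)
      rwa [← Real.rpow_mul (gauge_nonneg x), mul_one_div_cancel hp.ne', Real.rpow_one] at this
  · apply Continuous.integrableOn_Ioc
    exact continuous_const.sub ((Real.continuous_rpow_const (by positivity)).mul continuous_const)
  · refine (ae_restrict_iff' measurableSet_Ioc).2 (Filter.Eventually.of_forall fun t ht => ?_)
    exact hpos t ht.1 ht.2

theorem volume_ratio_ge_gauge_moment (k : ℕ) (hk : 0 < k)
    (C B : Set (EuclideanSpace ℝ (Fin k)))
    (hCc : IsCompact C) (hCconv : Convex ℝ C) (hCsym : C = -C)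
    (hCint : (interior C).Nonempty)
    (hBc : IsCompact B) (hBconv : Convex ℝ B) (hBsym : B = -B)
    (hBint : (interior B).Nonempty)
    (p : ℝ) (hp : 0 < p) :
    ((volume C).toReal / (volume B).toReal) ^ ((1 : ℝ) / k)
      ≥ ((((k : ℝ) + p) / (k * (volume B).toReal)) *
          ∫ x in B, gauge C x ^ p) ^ (-(1 / p)) := by
  have h0 := aux_zero_mem hCconv hCsym hCint
  have hc : 0 < (volume C).toReal :=
    ENNReal.toReal_pos (MeasureTheory.Measure.measure_pos_of_nonempty_interior _ hCint).ne' hCc.measure_lt_top.ne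
  have hb : 0 < (volume B).toReal :=
    ENNReal.toReal_pos (MeasureTheory.Measure.measure_pos_of_nonempty_interior _ hBint).ne' hBc.measure_lt_top.ne
  have hmain := fun T hT => aux_main (T := T) hCc hCconv h0 hBc p hp hT
  generalize (∫ x in B, gauge C x ^ p) = I at *
  generalize (volume C).toReal = c at *
  generalize (volume B).toReal = b at *
  have hk' : (0:ℝ) < k := by exact_mod_cast hk
  have hbc : 0 < b / c := by positivity
  have hT : 0 < (b / c) ^ (p / k) := Real.rpow_pos_of_pos hbc _
  have hTk : ((b / c) ^ (p / k)) ^ ((k:ℝ)/p) = b / c := by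
    rw [← Real.rpow_mul hbc.le, div_mul_div_cancel₀ hk'.ne', div_self hp.ne', Real.rpow_one]
  have h := hmain _ hT.le (by
    intro t ht htT
    have := Real.rpow_le_rpow ht.le htT (by positivity : 0 ≤ (k:ℝ)/p)
    rw [hTk, le_div_iff₀ hc] at this
    linarith)
  have hkp : (0:ℝ) < k / p := by positivity
  have hcts : Continuous (fun t : ℝ => t ^ ((k:ℝ)/p) * c) :=
    (Real.continuous_rpow_const hkp.le).mul continuous_const
  rw [intervalIntegral.integral_sub (by simp) (hcts.intervalIntegrable _ _),
    intervalIntegral.integral_const, intervalIntegral.integral_mul_const,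
    integral_rpow (Or.inl (by linarith)), Real.rpow_add hT, hTk, Real.rpow_one,
    Real.zero_rpow (by positivity)] at h
  have hle : (b / c) ^ (p / k) ≤ ((k:ℝ) + p) / (k * b) * I := by
    refine le_trans (le_of_eq ?_) (mul_le_mul_of_nonneg_left h (by positivity))
    generalize (b / c) ^ (p / k) = T
    simp only [smul_eq_mul]
    field_simp
    ring
  refine (Real.rpow_le_rpow_of_nonpos hT hle (by simp [hp.le])).trans (le_of_eq ?_)
  rw [← Real.rpow_mul hbc.le, ← inv_div b c, Real.inv_rpow hbc.le, ← Real.rpow_neg hbc.le]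
  congr 1
  field_simp
end
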